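/- Let p and q be coprime integers with q > 0 and p/q ≠ −1/2, and let σ ∈ PGL₂(ℚ) be given by σ(z) = (qz + p)/((p + q)z − q) (an involution interchanging (1 + i√3)/2 and (1 − i√3)/2). Then for every algebraic number α with α ∉ {(1 + i√3)/2, (1 − i√3)/2}, h(α) + h(σ(α)) ≥ log max(|p + 2q|/3, |p − q|/3). Moreover, if 3 divides p − q, then equality holds for α = −1. -/

import Mathlib

/- For a nonzero `f ∈ ℤ[X]`, the Mahler measure `M(f) = |a_n| ∏ max(|α_i|,1)`. -/
open Polynomial

noncomputable def mahlerMeasure (f : ℤ[X]) : ℝ :=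
  |(f.leadingCoeff : ℝ)| *
    (((f.map (Int.castRingHom ℂ)).roots).map (fun z => max ‖z‖ 1)).prod

/-- The primitive minimal polynomial over `ℤ` of an algebraic number. -/
noncomputable def intMinpoly (α : ℂ) : ℤ[X] :=
  (IsLocalization.integerNormalization (nonZeroDivisors ℤ) (minpoly ℚ α)).primPart

/-- The absolute logarithmic Weil height `h(α) = (1/n) log M(f)`. -/
noncomputable def height (α : ℂ) : ℝ :=
  Real.log (mahlerMeasure (intMinpoly α)) / (minpoly ℚ α).natDegree

/-!
Over a Galois number field `K` of degree `d` containing `α`, the Gauss norm of a primitive integer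
polynomial is `1` at every finite place, so by the product formula `M(f) ^ d` is the product of the
heights, relative to `K`, of the roots of `f`. Averaging over the Galois group, `d ^ 2 * h(α)` is
the sum of the relative logarithmic heights of the conjugates of `α`.

It therefore suffices to bound the relative height of `x` times that of `σ(x)`, for each conjugate
`x`. Write `σ(x) = y / w` with `y = q * x + p` and `w = (p + q) * x - q`. At every place `v`,
`c_v * |x ^ 2 - x + 1|_v ≤ max(|x|_v, 1) * max(|y|_v, |w|_v)`, where `c_v = 1` at the finite places,
by a Bézout identity, and `c_v = max(|p + 2 * q|, |p - q|) / 3` at the infinite ones, by the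
positivity of a binary quadratic form. The product formula for `x ^ 2 - x + 1` turns this into the
bound.
-/

open Height Height.AdmissibleAbsValues

section GaussNorm

variable {K : Type*} [Field K] {v : AbsoluteValue K ℝ}

lemma gaussNorm_X_sub_C (v : AbsoluteValue K ℝ) (y : K) :
    (X - C y).gaussNorm v 1 = max (v y) 1 := by
  apply le_antisymm
  · obtain ⟨i, hi⟩ := (X - C y).exists_eq_gaussNorm v 1
    rw [hi]
    rcases i with _ | _ | i <;> simp [coeff_X, coeff_C]
  · have h₀ := (X - C y).le_gaussNorm v zero_le_one 0
    have h₁ := (X - C y).le_gaussNorm v zero_le_one 1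
    simp only [coeff_sub, coeff_X_zero, coeff_C_zero, coeff_X_one, coeff_C_succ, zero_sub, sub_zero,
      map_neg_eq_map, map_one, one_pow, mul_one] at h₀ h₁
    exact max_le h₀ h₁

lemma gaussNorm_eq_leadingCoeff_mul_prod_roots (hv : IsNonarchimedean v) {f : K[X]}
    (hf : f.Splits) :
    f.gaussNorm v 1 = v f.leadingCoeff * (f.roots.map fun y ↦ max (v y) 1).prod := by
  have hprod (s : Multiset K) :
      (s.map (X - C ·)).prod.gaussNorm v 1 = (s.map fun y ↦ max (v y) 1).prod := by
    induction s using Multiset.induction_on with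
    | empty => simpa using gaussNorm_C v 1 (1 : K)
    | cons y s ih => simp [gaussNorm_mul hv zero_lt_one, gaussNorm_X_sub_C, ih]
  conv_lhs => rw [hf.eq_prod_roots, gaussNorm_mul hv zero_lt_one, gaussNorm_C, hprod]

lemma gaussNorm_map_intCast_of_isPrimitive (hv : IsNonarchimedean v) {f : ℤ[X]}
    (hf : f.IsPrimitive) : (f.map (Int.castRingHom K)).gaussNorm v 1 = 1 := by
  set g := f.map (Int.castRingHom K)
  have hcoeff (i : ℕ) : v (f.coeff i : K) ≤ g.gaussNorm v 1 := by
    simpa [g] using g.le_gaussNorm v zero_le_one i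
  apply le_antisymm
  · obtain ⟨i, hi⟩ := g.exists_eq_gaussNorm v 1
    simpa [hi, g] using hv.apply_intCast_le_one
  · have hspan (n : ℤ) (hn : n ∈ f.contentIdeal) : v n ≤ g.gaussNorm v 1 := by
      induction hn using Submodule.span_induction with
      | mem n hn =>
        obtain ⟨i, -, rfl⟩ := mem_coeffs_iff.1 hn
        exact hcoeff i
      | zero => simpa using g.gaussNorm_nonneg v zero_le_one
      | add m n _ _ hm hn => simpa using (hv _ _).trans (max_le hm hn)
      | smul a n _ hn =>
        simpa using (mul_le_of_le_one_left (v.nonneg _) hv.apply_intCast_le_one).trans hn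
    simpa using hspan 1 (by simp [(isPrimitive_iff_contentIdeal_eq_top f).1 hf])

end GaussNorm

lemma hasFiniteMulSupport_prod_max_one {K : Type*} [Field K] [AdmissibleAbsValues K]
    (s : Multiset K) :
    (fun v : nonarchAbsVal ↦ (s.map fun x ↦ max (v.val x) 1).prod).HasFiniteMulSupport := by
  induction s using Multiset.induction_on with
  | empty => simp [Function.HasFiniteMulSupport]
  | cons x s ih =>
    rcases eq_or_ne x 0 with rfl | hx
    · simpa using ih
    · have := hasFiniteMulSupport hx
      simp only [Multiset.map_cons, Multiset.prod_cons]
      fun_prop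

lemma prod_map_mulHeight₁ {K : Type*} [Field K] [AdmissibleAbsValues K] (s : Multiset K) :
    (s.map mulHeight₁).prod =
      (archAbsVal.map fun v ↦ (s.map fun x ↦ max (v x) 1).prod).prod *
        ∏ᶠ v : nonarchAbsVal, (s.map fun x ↦ max (v.val x) 1).prod := by
  induction s using Multiset.induction_on with
  | empty => simp
  | cons x s ih =>
    have hx := hasFiniteMulSupport_prod_max_one {x}
    simp only [Multiset.map_singleton, Multiset.prod_singleton] at hx
    simp only [Multiset.map_cons, Multiset.prod_cons, Multiset.prod_map_mul, ih, mulHeight₁_eq,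
      finprod_mul_distrib hx (hasFiniteMulSupport_prod_max_one s), mul_mul_mul_comm]

lemma mahlerMeasure_eq_prod_roots_of_splits {K : Type*} [Field K] (φ : K →+* ℂ) {f : ℤ[X]}
    (hf : (f.map (Int.castRingHom K)).Splits) :
    _root_.mahlerMeasure f = ‖φ f.leadingCoeff‖ *
      ((f.map (Int.castRingHom K)).roots.map fun y ↦ max ‖φ y‖ 1).prod := by
  have hmap : f.map (Int.castRingHom ℂ) = (f.map (Int.castRingHom K)).map φ := by
    rw [Polynomial.map_map, RingHom.eq_intCast' (φ.comp _)]
  simp [_root_.mahlerMeasure, hmap, hf.roots_map φ]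

lemma prod_mulHeight₁_roots {K : Type*} [Field K] [NumberField K] {f : ℤ[X]}
    (hf : f.IsPrimitive) (hsplits : (f.map (Int.castRingHom K)).Splits) :
    ((f.map (Int.castRingHom K)).roots.map mulHeight₁).prod =
      _root_.mahlerMeasure f ^ Module.finrank ℚ K := by
  have hinj : Function.Injective (Int.castRingHom K) := RingHom.injective_int _
  set a := (f.leadingCoeff : K)
  have ha : a ≠ 0 := by simpa [a] using hf.ne_zero
  set s := (f.map (Int.castRingHom K)).roots
  have harch (v) (hv : v ∈ archAbsVal (K := K)) :
      v a * (s.map fun y ↦ max (v y) 1).prod = _root_.mahlerMeasure f := by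
    obtain ⟨φ, rfl⟩ := NumberField.mem_multisetInfinitePlace.1 hv
    exact (mahlerMeasure_eq_prod_roots_of_splits φ hsplits).symm
  have hnonarch (v : nonarchAbsVal (K := K)) :
      v.val a * (s.map fun y ↦ max (v.val y) 1).prod = 1 := by
    have hv := isNonarchimedean v.val v.2
    have := gaussNorm_eq_leadingCoeff_mul_prod_roots hv hsplits
    rwa [gaussNorm_map_intCast_of_isPrimitive hv hf, leadingCoeff_map_of_injective hinj, eq_comm]
      at this
  calc (s.map mulHeight₁).prod
      = ((archAbsVal.map (· a)).prod * ∏ᶠ v : nonarchAbsVal, v.val a) *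
          ((archAbsVal.map fun v ↦ (s.map fun x ↦ max (v x) 1).prod).prod *
            ∏ᶠ v : nonarchAbsVal, (s.map fun x ↦ max (v.val x) 1).prod) := by
        rw [product_formula ha, one_mul, prod_map_mulHeight₁]
    _ = (archAbsVal.map fun v ↦ v a * (s.map fun x ↦ max (v x) 1).prod).prod *
          ∏ᶠ v : nonarchAbsVal, v.val a * (s.map fun x ↦ max (v.val x) 1).prod := by
        rw [mul_mul_mul_comm, Multiset.prod_map_mul, finprod_mul_distrib (hasFiniteMulSupport ha)
          (hasFiniteMulSupport_prod_max_one s)]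
    _ = _root_.mahlerMeasure f ^ Module.finrank ℚ K := by
        simp [Multiset.map_congr rfl harch, hnonarch, ← NumberField.totalWeight_eq_finrank,
          totalWeight]

lemma isPrimitive_intMinpoly (α : ℂ) : (intMinpoly α).IsPrimitive :=
  isPrimitive_primPart _

lemma exists_map_intMinpoly_eq_C_mul_minpoly {α : ℂ} (hα : IsAlgebraic ℚ α) :
    ∃ r : ℚ, r ≠ 0 ∧ (intMinpoly α).map (Int.castRingHom ℚ) = C r * minpoly ℚ α := by
  set N := IsLocalization.integerNormalization (nonZeroDivisors ℤ) (minpoly ℚ α) with hN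
  obtain ⟨b, hb, hbN⟩ := IsLocalization.integerNormalization_spec (nonZeroDivisors ℤ) (minpoly ℚ α)
  have hb : (b : ℚ) ≠ 0 := mod_cast nonZeroDivisors.ne_zero hb
  have hc : (N.content : ℚ) ≠ 0 := by
    simpa [hN, content_eq_zero_iff, IsFractionRing.integerNormalization_eq_zero_iff]
      using minpoly.ne_zero hα.isIntegral
  have hN_eq : N.map (Int.castRingHom ℚ) = C (b : ℚ) * minpoly ℚ α := by
    rw [← smul_eq_C_mul, Int.cast_smul_eq_zsmul]
    exact hbN
  have hN_content : N.map (Int.castRingHom ℚ) =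
      C (N.content : ℚ) * (intMinpoly α).map (Int.castRingHom ℚ) := by
    conv_lhs => rw [eq_C_content_mul_primPart N, Polynomial.map_mul, map_C]
    rfl
  refine ⟨b / N.content, div_ne_zero hb hc, mul_left_cancel₀ (C_ne_zero.2 hc) ?_⟩
  rw [← hN_content, hN_eq, ← mul_assoc, ← C_mul, mul_div_cancel₀ _ hc]

section Galois

variable {F K : Type*} [Field F] [Field K] [Algebra F K]

lemma map_aroots_algEquiv {f : F[X]} (hf : (f.map (algebraMap F K)).Splits) (τ : Gal(K/F)) :
    (f.aroots K).map τ = f.aroots K := by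
  have := hf.roots_map (τ : K →ₐ[F] K).toRingHom
  rwa [Polynomial.map_map, AlgHom.toRingHom_eq_coe, AlgHom.comp_algebraMap, eq_comm] at this

lemma natDegree_minpoly_nsmul_sum_galois [FiniteDimensional F K] [IsGalois F K] {M : Type*}
    [AddCommMonoid M] (g : K → M) (x : K) :
    (minpoly F x).natDegree • ∑ τ : Gal(K/F), g (τ x) =
      Module.finrank F K • (((minpoly F x).aroots K).map g).sum := by
  set s := (minpoly F x).aroots K
  have hsplits : ((minpoly F x).map (algebraMap F K)).Splits := Normal.splits inferInstance x
  have hcard : s.card = (minpoly F x).natDegree := by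
    rw [← natDegree_map (algebraMap F K), hsplits.natDegree_eq_card_roots]
  have hfiber (y) (hy : y ∈ s) : ∑ τ : Gal(K/F), g (τ y) = ∑ τ : Gal(K/F), g (τ x) := by
    obtain ⟨τ₀, rfl⟩ := isConjRoot_iff_exists_algEquiv.1
      ((isConjRoot_iff_mem_minpoly_aroots (IsIntegral.of_finite F x)).2 hy).symm
    exact Fintype.sum_equiv (Equiv.mulRight τ₀) _ _ fun τ ↦ by simp
  calc (minpoly F x).natDegree • ∑ τ : Gal(K/F), g (τ x)
      = (s.map fun y ↦ ∑ τ : Gal(K/F), g (τ y)).sum := by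
        simp [Multiset.map_congr rfl hfiber, hcard]
    _ = ∑ τ : Gal(K/F), ((s.map τ).map g).sum := by
        simp only [Multiset.map_map]
        exact Multiset.sum_map_sum_map _ _
    _ = Module.finrank F K • (s.map g).sum := by
        simp only [s, map_aroots_algEquiv hsplits]
        simp [← IsGalois.card_aut_eq_finrank, Nat.card_eq_fintype_card]

end Galois

section NumberField

variable {K : Type*} [Field K] [NumberField K] [IsGalois ℚ K] (φ : K →ₐ[ℚ] ℂ) (x : K)

lemma prod_mulHeight₁_aroots_minpoly :
    (((minpoly ℚ x).aroots K).map mulHeight₁).prod =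
      _root_.mahlerMeasure (intMinpoly (φ x)) ^ Module.finrank ℚ K := by
  have hx := Algebra.IsIntegral.isIntegral (R := ℚ) x
  obtain ⟨r, hr, hmap⟩ := exists_map_intMinpoly_eq_C_mul_minpoly (hx.map φ).isAlgebraic
  have hmapK : (intMinpoly (φ x)).map (Int.castRingHom K) =
      C (r : K) * (minpoly ℚ x).map (algebraMap ℚ K) := by
    have := congrArg (Polynomial.map (algebraMap ℚ K)) hmap
    rwa [Polynomial.map_map, RingHom.eq_intCast' (RingHom.comp _ _), Polynomial.map_mul, map_C,
      eq_ratCast, minpoly.algHom_eq φ φ.injective] at this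
  have hr : (r : K) ≠ 0 := mod_cast hr
  have hsplits : ((intMinpoly (φ x)).map (Int.castRingHom K)).Splits := by
    rw [hmapK]
    exact (Splits.C _).mul (Normal.splits inferInstance x)
  rw [← prod_mulHeight₁_roots (isPrimitive_intMinpoly _) hsplits, hmapK, roots_C_mul _ hr]

lemma sum_logHeight₁_galois :
    ∑ τ : Gal(K/ℚ), logHeight₁ (τ x) = (Module.finrank ℚ K : ℝ) ^ 2 * height (φ x) := by
  set n := (minpoly ℚ x).natDegree with hn_def
  have hn : (n : ℝ) ≠ 0 :=
    mod_cast (minpoly.natDegree_pos (Algebra.IsIntegral.isIntegral x)).ne'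
  have hsum : (((minpoly ℚ x).aroots K).map logHeight₁).sum =
      Module.finrank ℚ K * Real.log (_root_.mahlerMeasure (intMinpoly (φ x))) := by
    rw [← Real.log_pow, ← prod_mulHeight₁_aroots_minpoly, Real.log_multiset_prod, Multiset.map_map]
    · rfl
    · intro t ht
      obtain ⟨y, -, rfl⟩ := Multiset.mem_map.1 ht
      exact mulHeight₁_ne_zero y
  apply mul_left_cancel₀ hn
  rw [← nsmul_eq_mul, natDegree_minpoly_nsmul_sum_galois, nsmul_eq_mul, hsum, height,
    minpoly.algHom_eq φ φ.injective, ← hn_def]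
  field_simp

lemma le_height_add_height_of_forall_galois (y : K) {c : ℝ}
    (hc : ∀ τ : Gal(K/ℚ), Module.finrank ℚ K * c ≤ logHeight₁ (τ x) + logHeight₁ (τ y)) :
    c ≤ height (φ x) + height (φ y) := by
  have hd : 0 < (Module.finrank ℚ K : ℝ) := mod_cast Module.finrank_pos
  refine le_of_mul_le_mul_left ?_ (pow_pos hd 2)
  calc (Module.finrank ℚ K : ℝ) ^ 2 * c = ∑ _ : Gal(K/ℚ), Module.finrank ℚ K * c := by
        simp [← IsGalois.card_aut_eq_finrank ℚ K, Nat.card_eq_fintype_card, pow_two, mul_assoc]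
    _ ≤ ∑ τ : Gal(K/ℚ), (logHeight₁ (τ x) + logHeight₁ (τ y)) :=
        Finset.sum_le_sum fun τ _ ↦ hc τ
    _ = (Module.finrank ℚ K : ℝ) ^ 2 * (height (φ x) + height (φ y)) := by
        rw [Finset.sum_add_distrib, sum_logHeight₁_galois φ, sum_logHeight₁_galois φ, mul_add]

end NumberField

lemma height_ratCast (r : ℚ) : height r = logHeight₁ r := by
  have hminpoly : minpoly ℚ (r : ℂ) = X - C r := minpoly.eq_X_sub_C ℂ r
  obtain ⟨c, hc, hmap⟩ := exists_map_intMinpoly_eq_C_mul_minpoly (isAlgebraic_algebraMap (A := ℂ) r)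
  rw [eq_ratCast, hminpoly] at hmap
  have hsplits : ((intMinpoly r).map (Int.castRingHom ℚ)).Splits := by
    rw [hmap]
    exact (Splits.C _).mul (Splits.X_sub_C _)
  have hprod := prod_mulHeight₁_roots (isPrimitive_intMinpoly _) hsplits
  rw [hmap, roots_C_mul _ hc, roots_X_sub_C, Multiset.map_singleton, Multiset.prod_singleton,
    Module.finrank_self, pow_one] at hprod
  rw [height, hminpoly, natDegree_X_sub_C, Nat.cast_one, div_one, ← hprod,
    logHeight₁_eq_log_mulHeight₁]

section Archimedean

lemma quadratic_form_nonneg {a b c : ℝ} (ha : 0 ≤ a) (hc : 0 ≤ c) (hb : b ^ 2 ≤ a * c) (x y : ℝ) :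
    0 ≤ a * x ^ 2 + 2 * b * (x * y) + c * y ^ 2 := by
  have hsq : (2 * b * (x * y)) ^ 2 ≤ (a * x ^ 2 + c * y ^ 2) ^ 2 := by
    nlinarith [sq_nonneg (a * x ^ 2 - c * y ^ 2), mul_le_mul_of_nonneg_right hb (sq_nonneg (x * y))]
  linarith [neg_le_of_abs_le (abs_le_of_sq_le_sq hsq (by positivity))]

variable (z : ℂ)

lemma normSq_ofReal_mul_add_ofReal (a b : ℝ) :
    Complex.normSq (a * z + b) = a ^ 2 * Complex.normSq z + 2 * a * b * z.re + b ^ 2 := by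
  simp [Complex.normSq_apply]
  ring

lemma normSq_sq_sub_self_add_one :
    Complex.normSq (z ^ 2 - z + 1) =
      Complex.normSq z ^ 2 - Complex.normSq z + 1 - 2 * z.re * (1 + Complex.normSq z) +
        4 * z.re ^ 2 := by
  simp [Complex.normSq_apply, pow_two]
  ring

variable {z}

lemma normSq_sq_sub_self_add_one_le (hz : ‖z‖ ≤ 1) : Complex.normSq (z ^ 2 - z + 1) ≤ 9 := by
  have hbound : ‖z ^ 2 - z + 1‖ ≤ 3 := by
    calc ‖z ^ 2 - z + 1‖ ≤ ‖z‖ ^ 2 + ‖z‖ + 1 := by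
          grw [norm_add_le, norm_sub_le, norm_pow, norm_one]
      _ ≤ 1 ^ 2 + 1 + 1 := by gcongr
      _ = 3 := by norm_num
  rw [Complex.normSq_eq_norm_sq]
  exact (pow_le_pow_left₀ (norm_nonneg _) hbound 2).trans_eq (by norm_num)

lemma normSq_le_one (hz : ‖z‖ ≤ 1) : Complex.normSq z ≤ 1 := by
  rw [Complex.normSq_eq_norm_sq]
  exact pow_le_one₀ (norm_nonneg z) hz

lemma sq_re_le_normSq (z : ℂ) : z.re ^ 2 ≤ Complex.normSq z :=
  (sq z.re).trans_le (Complex.re_sq_le_normSq z)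

-- Moving everything to the right leaves a quadratic form in `p + 2 * q` and `q`, of determinant
-- `9 * z.im ^ 2 * (9 - ‖z ^ 2 - z + 1‖ ^ 2)`.
lemma sq_add_two_mul_mul_normSq_le (p q : ℝ) (hz : ‖z‖ ≤ 1) :
    (p + 2 * q) ^ 2 * Complex.normSq (z ^ 2 - z + 1) ≤
      3 * ((1 + z.re) * Complex.normSq (q * z + p) +
        (2 - z.re) * Complex.normSq ((p + q : ℝ) * z + (-q : ℝ))) := by
  obtain ⟨hx₁, hx₂⟩ : -1 ≤ z.re ∧ z.re ≤ 1 := abs_le.1 ((Complex.abs_re_le_norm z).trans hz)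
  have hxr := sq_re_le_normSq z
  have hr := normSq_le_one hz
  have hN := normSq_sq_sub_self_add_one z
  have hN_le := normSq_sq_sub_self_add_one_le hz
  simp only [normSq_ofReal_mul_add_ofReal]
  generalize Complex.normSq (z ^ 2 - z + 1) = N at *
  generalize Complex.normSq z = r at *
  generalize z.re = x at *
  have hα : 0 ≤ 3 * (1 + x + (2 - x) * r) - N := by
    have hfactor : 3 * (1 + x + (2 - x) * r) - N =
        (1 + x) ^ 3 * (2 - x) + (r - x ^ 2) * ((1 - r) + (3 + x) * (2 - x)) := by
      rw [hN]; ring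
    rw [hfactor]
    have := pow_nonneg (neg_le_iff_add_nonneg'.1 hx₁) 3
    nlinarith
  have hγ : 0 ≤ 9 * ((1 + x) * (2 - x) + (r - x ^ 2)) := by nlinarith
  have hdet : (3 * (2 - x) * (1 + 2 * x + r)) ^ 2 ≤
      (3 * (1 + x + (2 - x) * r) - N) * (9 * ((1 + x) * (2 - x) + (r - x ^ 2))) := by
    have : 0 ≤ (r - x ^ 2) * (9 - N) := mul_nonneg (sub_nonneg.2 hxr) (sub_nonneg.2 hN_le)
    subst hN
    linarith
  have := quadratic_form_nonneg hα hγ ((neg_sq _).trans_le hdet) (p + 2 * q) q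
  linarith

-- Here the quadratic form, in `p - q` and `q`, has determinant
-- `9 * (9 * z.im ^ 2 - ‖z ^ 2 - z + 1‖ ^ 2 * (z.im ^ 2 - (1 + z.re) * (1 - ‖z‖ ^ 2)))`.
lemma sq_sub_mul_normSq_le (p q : ℝ) (hz : ‖z‖ ≤ 1) :
    (p - q) ^ 2 * Complex.normSq (z ^ 2 - z + 1) ≤
      3 * ((2 - z.re) * Complex.normSq (q * z + p) +
        (1 + z.re) * Complex.normSq ((p + q : ℝ) * z + (-q : ℝ))) := by
  obtain ⟨hx₁, hx₂⟩ : -1 ≤ z.re ∧ z.re ≤ 1 := abs_le.1 ((Complex.abs_re_le_norm z).trans hz)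
  have hxr := sq_re_le_normSq z
  have hr := normSq_le_one hz
  have hN := normSq_sq_sub_self_add_one z
  have hN_nonneg := Complex.normSq_nonneg (z ^ 2 - z + 1)
  have hN_le := normSq_sq_sub_self_add_one_le hz
  simp only [normSq_ofReal_mul_add_ofReal]
  generalize Complex.normSq (z ^ 2 - z + 1) = N at *
  generalize Complex.normSq z = r at *
  generalize z.re = x at *
  have hα : 0 ≤ 3 * (2 - x + (1 + x) * r) - N := by
    have hfactor : 3 * (2 - x + (1 + x) * r) - N = (1 - x + r) * (5 + 4 * x - r) := by
      rw [hN]; ring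
    rw [hfactor]
    exact mul_nonneg (by nlinarith) (by linarith)
  have hγ : 0 ≤ 3 * ((2 - x) * (1 + 2 * x + r) + (1 + x) * (1 - 4 * x + 4 * r)) := by nlinarith
  have hdet : (6 * (1 + x) * (1 - x + r)) ^ 2 ≤ (3 * (2 - x + (1 + x) * r) - N) *
      (3 * ((2 - x) * (1 + 2 * x + r) + (1 + x) * (1 - 4 * x + 4 * r))) := by
    have : 0 ≤ (r - x ^ 2) * (9 - N) + N * ((1 + x) * (1 - r)) := by
      have := mul_nonneg (sub_nonneg.2 hxr) (sub_nonneg.2 hN_le)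
      have := mul_nonneg hN_nonneg (mul_nonneg (neg_le_iff_add_nonneg'.1 hx₁) (sub_nonneg.2 hr))
      linarith
    subst hN
    linarith
  have := quadratic_form_nonneg hα hγ hdet (p - q) q
  linarith

lemma max_abs_mul_norm_le_of_norm_le_one (p q : ℝ) (hz : ‖z‖ ≤ 1) :
    max |p + 2 * q| |p - q| * ‖z ^ 2 - z + 1‖ ≤
      3 * max ‖(q * z + p : ℂ)‖ ‖((p + q) * z - q : ℂ)‖ := by
  obtain ⟨hx₁, hx₂⟩ : -1 ≤ z.re ∧ z.re ≤ 1 := abs_le.1 ((Complex.abs_re_le_norm z).trans hz)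
  have h₁ := sq_add_two_mul_mul_normSq_le p q hz
  have h₂ := sq_sub_mul_normSq_le p q hz
  push_cast at h₁ h₂
  simp only [← sub_eq_add_neg, Complex.normSq_eq_norm_sq] at h₁ h₂
  set m := max ‖(q * z + p : ℂ)‖ ‖((p + q) * z - q : ℂ)‖
  have hy : ‖(q * z + p : ℂ)‖ ^ 2 ≤ m ^ 2 := by gcongr; exact le_max_left _ _
  have hw : ‖((p + q) * z - q : ℂ)‖ ^ 2 ≤ m ^ 2 := by gcongr; exact le_max_right _ _
  have hm : 0 ≤ 3 * m := by positivity
  have habs {t : ℝ} (ht : t ^ 2 * ‖z ^ 2 - z + 1‖ ^ 2 ≤ (3 * m) ^ 2) :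
      |t| * ‖z ^ 2 - z + 1‖ ≤ 3 * m := by
    exact (pow_le_pow_iff_left₀ (by positivity) hm two_ne_zero).1 (by rwa [mul_pow, sq_abs])
  rw [max_mul_of_nonneg _ _ (norm_nonneg _)]
  exact max_le (habs (by nlinarith)) (habs (by nlinarith))

variable (z) in
lemma max_abs_mul_norm_le (p q : ℝ) :
    max |p + 2 * q| |p - q| * ‖z ^ 2 - z + 1‖ ≤
      3 * (max ‖z‖ 1 * max ‖(q * z + p : ℂ)‖ ‖((p + q) * z - q : ℂ)‖) := by
  rcases le_total ‖z‖ 1 with hz | hz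
  · rw [max_eq_right hz, one_mul]
    exact max_abs_mul_norm_le_of_norm_le_one p q hz
  · -- Passing to `z⁻¹` replaces `(p, q)` by `(p + q, -q)`: this swaps `p + 2 * q` and `p - q`.
    have hz₀ : z ≠ 0 := norm_pos_iff.1 (one_pos.trans_le hz)
    have hinv : ‖z⁻¹‖ ≤ 1 := by rw [norm_inv]; exact inv_le_one_of_one_le₀ hz
    have h := max_abs_mul_norm_le_of_norm_le_one (p + q) (-q) hinv
    rw [show p + q + 2 * -q = p - q by ring, show p + q - -q = p + 2 * q by ring, max_comm] at h
    push_cast at h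
    have hQ : z ^ 2 - z + 1 = z ^ 2 * (z⁻¹ ^ 2 - z⁻¹ + 1) := by field_simp; ring
    have hy : (q * z + p : ℂ) = z * ((p + q + -q) * z⁻¹ - -q) := by field_simp; ring
    have hw : ((p + q) * z - q : ℂ) = z * (-q * z⁻¹ + (p + q)) := by field_simp; ring
    rw [max_eq_left hz, hQ, hy, hw]
    simp only [norm_mul, norm_pow]
    rw [← mul_max_of_nonneg _ _ (norm_nonneg z), max_comm ‖_ * z⁻¹ - _‖]
    linarith [mul_le_mul_of_nonneg_left h (sq_nonneg ‖z‖)]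

end Archimedean

section Nonarchimedean

variable {K : Type*} [Field K] {p q : ℤ}

lemma exists_sq_sub_self_add_one_eq {R : Type*} [CommRing R] (hpq : IsCoprime p q) (x : R) :
    ∃ u v : ℤ, x ^ 2 - x + 1 =
      ((v - u) * x + u) * (q * x + p) + (u * x - v) * ((p + q) * x - q) := by
  obtain ⟨u, v, huv⟩ := hpq
  have huv : (u * p + v * q : R) = 1 := mod_cast congrArg (Int.cast (R := R)) huv
  exact ⟨u, v, by linear_combination -(x ^ 2 - x + 1) * huv⟩

lemma apply_sq_sub_self_add_one_le {v : AbsoluteValue K ℝ} (hv : IsNonarchimedean v)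
    (hpq : IsCoprime p q) (x : K) :
    v (x ^ 2 - x + 1) ≤ max (v x) 1 * max (v (q * x + p)) (v ((p + q) * x - q)) := by
  obtain ⟨a, b, hab⟩ := exists_sq_sub_self_add_one_eq hpq x
  have hlinear (m n : ℤ) : v (m * x + n) ≤ max (v x) 1 := by
    refine (hv _ _).trans (max_le_max ?_ hv.apply_intCast_le_one)
    rw [map_mul]
    exact mul_le_of_le_one_left (v.nonneg x) hv.apply_intCast_le_one
  have h₁ := hlinear (b - a) a
  have h₂ := hlinear a (-b)
  push_cast [← sub_eq_add_neg] at h₁ h₂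
  rw [hab]
  refine (hv _ _).trans (max_le ?_ ?_) <;> rw [map_mul]
  · gcongr
    exact le_max_left _ _
  · gcongr
    exact le_max_right _ _

end Nonarchimedean

lemma ciSup_fin_two {α : Type*} [ConditionallyCompleteLinearOrder α] (f : Fin 2 → α) :
    ⨆ i, f i = max (f 0) (f 1) :=
  eq_of_forall_ge_iff <| by simp [ciSup_le_iff, Fin.forall_fin_two]

section AdmissibleAbsValues

variable {K : Type*} [Field K] [AdmissibleAbsValues K] {a : K} {c : ℝ}

lemma pow_totalWeight_le_mulHeight {ι : Type*} [Finite ι] {x : ι → K} (hx : x ≠ 0) (ha : a ≠ 0)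
    (hc : 0 ≤ c) (harch : ∀ v ∈ archAbsVal (K := K), c * v a ≤ ⨆ i, v (x i))
    (hnonarch : ∀ v ∈ nonarchAbsVal (K := K), v a ≤ ⨆ i, v (x i)) :
    c ^ totalWeight K ≤ mulHeight x := by
  have hsup (v : AbsoluteValue K ℝ) : ⨆ i, v ((a⁻¹ • x) i) = (v a)⁻¹ * ⨆ i, v (x i) := by
    simp [Real.mul_iSup_of_nonneg]
  rw [← mulHeight_smul_eq_mulHeight x (inv_ne_zero ha),
    mulHeight_eq (smul_ne_zero (inv_ne_zero ha) hx), totalWeight, ← Multiset.prod_replicate,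
    ← Multiset.map_const, ← mul_one (Multiset.prod _)]
  simp only [hsup]
  gcongr
  · exact Multiset.prod_map_nonneg fun v _ ↦
      mul_nonneg (by positivity) (Real.iSup_nonneg fun i ↦ v.nonneg _)
  · refine Multiset.prod_map_le_prod_map₀ _ _ (fun _ _ ↦ hc) fun v hv ↦ ?_
    rw [le_inv_mul_iff₀ (v.pos ha), mul_comm]
    exact harch v hv
  · refine one_le_finprod fun v ↦ ?_
    rw [le_inv_mul_iff₀ (v.val.pos ha), mul_one]
    exact hnonarch v.val v.2

lemma pow_totalWeight_le_mulHeight_mul_mulHeight {ι κ : Type*} [Finite ι] [Finite κ] {x : ι → K}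
    {y : κ → K} (hx : x ≠ 0) (hy : y ≠ 0) (ha : a ≠ 0) (hc : 0 ≤ c)
    (harch : ∀ v ∈ archAbsVal (K := K), c * v a ≤ (⨆ i, v (x i)) * ⨆ j, v (y j))
    (hnonarch : ∀ v ∈ nonarchAbsVal (K := K), v a ≤ (⨆ i, v (x i)) * ⨆ j, v (y j)) :
    c ^ totalWeight K ≤ mulHeight x * mulHeight y := by
  obtain ⟨i, hi⟩ := Function.ne_iff.1 hx
  obtain ⟨j, hj⟩ := Function.ne_iff.1 hy
  rw [← mulHeight_fun_mul_eq hx hy]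
  refine pow_totalWeight_le_mulHeight (Function.ne_iff.2 ⟨(i, j), mul_ne_zero hi hj⟩) ha hc ?_ ?_
  · simpa only [Real.iSup_fun_mul_eq_iSup_mul_iSup_of_nonneg] using harch
  · simpa only [Real.iSup_fun_mul_eq_iSup_mul_iSup_of_nonneg] using hnonarch

end AdmissibleAbsValues

section NumberField

variable {K : Type*} [Field K] [NumberField K] {p q : ℤ} {x : K}

lemma pow_finrank_le_mulHeight₁_mul_mulHeight₁ (hpq : IsCoprime p q) (hx : x ^ 2 - x + 1 ≠ 0) :
    (max |(p + 2 * q : ℝ)| |(p - q : ℝ)| / 3) ^ Module.finrank ℚ K ≤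
      mulHeight₁ x * mulHeight₁ ((q * x + p) / ((p + q) * x - q)) := by
  have hne : ![q * x + p, (p + q) * x - q] ≠ 0 := by
    intro h
    obtain ⟨u, v, huv⟩ := exists_sq_sub_self_add_one_eq hpq x
    rw [show q * x + p = 0 from congrFun h 0, show (p + q) * x - q = 0 from congrFun h 1] at huv
    simp [huv] at hx
  rw [mulHeight₁_eq_mulHeight, mulHeight₁_div_eq_mulHeight, ← NumberField.totalWeight_eq_finrank]
  refine pow_totalWeight_le_mulHeight_mul_mulHeight (by simp) hne hx (by positivity) ?_ ?_ <;>
    intro v hv <;> simp only [ciSup_fin_two, Matrix.cons_val_zero, Matrix.cons_val_one, map_one]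
  · obtain ⟨φ, rfl⟩ := NumberField.mem_multisetInfinitePlace.1 hv
    have h := max_abs_mul_norm_le (φ x) p q
    have hmap : φ (q * x + p) = (q : ℝ) * φ x + (p : ℝ) ∧
        φ ((p + q) * x - q) = ((p : ℝ) + (q : ℝ)) * φ x - (q : ℝ) ∧
        φ (x ^ 2 - x + 1) = φ x ^ 2 - φ x + 1 := by simp
    simp only [NumberField.place_apply, hmap]
    linarith
  · exact apply_sq_sub_self_add_one_le (isNonarchimedean v hv) hpq x

lemma finrank_mul_log_le_logHeight₁_add (hpq : IsCoprime p q)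
    (hpos : 0 < max |(p + 2 * q : ℝ)| |(p - q : ℝ)|) (hx : x ^ 2 - x + 1 ≠ 0) :
    Module.finrank ℚ K * Real.log (max |(p + 2 * q : ℝ)| |(p - q : ℝ)| / 3) ≤
      logHeight₁ x + logHeight₁ ((q * x + p) / ((p + q) * x - q)) := by
  rw [logHeight₁_eq_log_mulHeight₁, logHeight₁_eq_log_mulHeight₁, ← Real.log_pow,
    ← Real.log_mul (mulHeight₁_ne_zero _) (mulHeight₁_ne_zero _)]
  exact Real.log_le_log (by positivity) (pow_finrank_le_mulHeight₁_mul_mulHeight₁ hpq hx)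

end NumberField

lemma exists_isGalois_algHom_eq {α : ℂ} (hα : IsAlgebraic ℚ α) :
    ∃ (K : Type) (_ : Field K) (_ : NumberField K) (_ : IsGalois ℚ K) (φ : K →ₐ[ℚ] ℂ) (x : K),
      φ x = α := by
  set K := IntermediateField.adjoin ℚ ((minpoly ℚ α).rootSet ℂ)
  have : (minpoly ℚ α).IsSplittingField ℚ K :=
    IntermediateField.adjoin_rootSet_isSplittingField (IsAlgClosed.splits _)
  have : FiniteDimensional ℚ K := IsSplittingField.finiteDimensional K (minpoly ℚ α)
  have : Normal ℚ K := Normal.of_isSplittingField (minpoly ℚ α)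
  have hαK : α ∈ K := IntermediateField.subset_adjoin _ _ <|
    mem_rootSet.2 ⟨minpoly.ne_zero hα.isIntegral, minpoly.aeval ℚ α⟩
  exact ⟨K, inferInstance, ⟨⟩, ⟨⟩, K.val, ⟨α, hαK⟩, rfl⟩

lemma log_max_le_height_add_height {p q : ℤ} (hpq : IsCoprime p q)
    (hpos : 0 < max |(p + 2 * q : ℝ)| |(p - q : ℝ)|) {α : ℂ} (hα : IsAlgebraic ℚ α)
    (hα' : α ^ 2 - α + 1 ≠ 0) :
    Real.log (max |(p + 2 * q : ℝ)| |(p - q : ℝ)| / 3) ≤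
      height α + height ((q * α + p) / ((p + q) * α - q)) := by
  obtain ⟨K, _, _, _, φ, x, rfl⟩ := exists_isGalois_algHom_eq hα
  have h := le_height_add_height_of_forall_galois φ x ((q * x + p) / ((p + q) * x - q)) fun τ ↦ by
    have hτx : τ x ^ 2 - τ x + 1 ≠ 0 := fun h ↦ hα' <| by
      simpa using congrArg (φ.comp (τ⁻¹ : Gal(K/ℚ)).toAlgHom) h
    simpa using finrank_mul_log_le_logHeight₁_add hpq hpos hτx
  simpa using h

lemma height_intCast_div_intCast {m n : ℤ} (hmn : IsCoprime m n) :
    height (m / n : ℂ) = Real.log (max |(m : ℝ)| |(n : ℝ)|) := by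
  have hgcd : Finset.univ.gcd ![m, n] = 1 := by
    simpa [Finset.univ_fin2, ← Int.coe_gcd, Int.gcd_eq_natAbs_gcd_natAbs, ← Int.abs_eq_normalize,
      Int.natAbs_abs]
      using Int.isCoprime_iff_gcd_eq_one.1 hmn
  have hvec : ![(m : ℚ), n] = ((↑) : ℤ → ℚ) ∘ ![m, n] := by
    ext i; fin_cases i <;> rfl
  calc height (m / n : ℂ) = logHeight₁ (m / n : ℚ) := by rw [← height_ratCast]; push_cast; rfl
    _ = Real.log (max |(m : ℝ)| |(n : ℝ)|) := by
      rw [logHeight₁_div_eq_logHeight, hvec, Rat.logHeight_eq_max_abs_of_gcd_eq_one hgcd,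
        ciSup_fin_two]
      simp

lemma height_neg_one : height (-1) = 0 := by
  simpa using height_intCast_div_intCast (isCoprime_one_right (x := (-1 : ℤ)))

lemma height_neg_one_add_height_eq {p q : ℤ} (hpq : IsCoprime p q) (h3 : 3 ∣ p - q) :
    height (-1) + height ((q * (-1) + p) / ((p + q) * (-1) - q)) =
      Real.log (max |(p + 2 * q : ℝ)| |(p - q : ℝ)| / 3) := by
  obtain ⟨m, hm⟩ := h3
  obtain rfl : p = q + 3 * m := by linarith
  have hcop : IsCoprime m (-(q + m)) := by
    have : IsCoprime (3 * m) q := .of_add_mul_left_left (z := 1) (by simpa [add_comm] using hpq)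
    simpa using (this.of_mul_left_right.add_mul_left_right 1).neg_right
  have hσ : (q * (-1) + (q + 3 * m : ℤ)) / (((q + 3 * m : ℤ) + q) * (-1) - q) =
      (m / (-(q + m) : ℤ) : ℂ) := by
    rw [← mul_div_mul_left (m : ℂ) _ three_ne_zero]
    push_cast
    ring_nf
  rw [height_neg_one, zero_add, hσ, height_intCast_div_intCast hcop, max_comm,
    ← max_div_div_right zero_le_three]
  push_cast
  rw [abs_neg, show (q + 3 * m + 2 * q : ℝ) = (q + m) * 3 by ring,
    show (q + 3 * m - q : ℝ) = m * 3 by ring]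
  simp [abs_mul]

/-- Row 7 of Table 1: for `σ(z) = (qz + p)/((p + q)z - q)` (an involution interchanging
`(1 + i√3)/2` and `(1 - i√3)/2`) with `p, q` coprime, `q > 0`, `p/q ≠ -1/2`: for every
algebraic `α ∉ {(1 + i√3)/2, (1 - i√3)/2}` one has
`h(α) + h(σ(α)) ≥ log max(|p + 2q|/3, |p - q|/3)`, with equality at `α = -1`
when `3 ∣ p - q`. -/
theorem table1_row7 (p q : ℤ) (hpq : IsCoprime p q) (hq : 0 < q)
    (hratio : (p : ℚ) / (q : ℚ) ≠ -(1 / 2)) :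
    (∀ α : ℂ, IsAlgebraic ℚ α →
      α ≠ (1 + Real.sqrt 3 * Complex.I) / 2 → α ≠ (1 - Real.sqrt 3 * Complex.I) / 2 →
      height α + height (((q : ℂ) * α + (p : ℂ)) / (((p : ℂ) + (q : ℂ)) * α - (q : ℂ)))
        ≥ Real.log (max ((|p + 2 * q| : ℝ) / 3) ((|p - q| : ℝ) / 3))) ∧
    (3 ∣ p - q →
      height (-1 : ℂ) +
          height (((q : ℂ) * (-1) + (p : ℂ)) / (((p : ℂ) + (q : ℂ)) * (-1) - (q : ℂ)))
        = Real.log (max ((|p + 2 * q| : ℝ) / 3) ((|p - q| : ℝ) / 3))) := by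
  have hpos : 0 < max |(p + 2 * q : ℝ)| |(p - q : ℝ)| := by
    have hq' : (0 : ℝ) < q := mod_cast hq
    rw [lt_max_iff, abs_pos, abs_pos]
    by_contra! h
    linarith
  rw [max_div_div_right zero_le_three]
  refine ⟨fun α hα h₁ h₂ ↦ log_max_le_height_add_height hpq hpos hα ?_,
    height_neg_one_add_height_eq hpq⟩
  have hsqrt : (Real.sqrt 3 : ℂ) ^ 2 = 3 := mod_cast Real.sq_sqrt (zero_le_three (α := ℝ))
  have hfactor : α ^ 2 - α + 1 =
      (α - (1 + Real.sqrt 3 * Complex.I) / 2) * (α - (1 - Real.sqrt 3 * Complex.I) / 2) := by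
    linear_combination -(1 / 4) * hsqrt + (1 / 4) * (Real.sqrt 3 : ℂ) ^ 2 * Complex.I_sq
  rw [hfactor]
  exact mul_ne_zero (sub_ne_zero.2 h₁) (sub_ne_zero.2 h₂)
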